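/- Let G = (V,E,W) and H = (V,E,W') be two biconnected weighted graphs on the same node set V of n nodes and the same edge set E (so that all shortest path lengths appearing below are finite). Then for every node x ∈ V, the stable betweenness centrality satisfies |C_SB^G(x) − C_SB^H(x)| ≤ 2n² · d_{(V,E)}(G,H). In particular, stable betweenness centrality is a stable centrality measure with stability constant K_G = 2n². -/

import Mathlib

/-!
A closed detour can be cut out of a walk without increasing its length, so every walk may be
replaced by a simple path with the same endpoints (`exists_simple_walk`). A simple path traverses
each edge at most once, so replacing `W` by `W'` changes its length by at most
`graphDist E W W'` (`walkLength_le_add`). Hence shortest path lengths, both in the graph and in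
the graph with a node deleted, are `1`-Lipschitz in the weights (`spdist_le_add`). Each of the at
most `n²` summands of the centrality is a difference of two such lengths, which are finite by
biconnectivity, whence the constant `2n²`.
-/


open scoped ENNReal

/-- `p` is the tail of a walk from `x` to `y` along edges of `E`:
the node sequence of the walk is `x :: p` and consecutive nodes are joined by edges in `E`. -/
def IsWalkFrom {V : Type*} (E : Finset (V × V)) (x y : V) (p : List V) : Prop :=
  List.Chain (fun a b => (a, b) ∈ E) x p ∧ (x :: p).getLast (List.cons_ne_nil x p) = y

/-- The length of the walk with node sequence `x :: p`: the sum of the weights of the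
traversed edges (as an extended nonnegative real). -/
noncomputable def walkLength {V : Type*} (W : V × V → ℝ) (x : V) (p : List V) : ℝ≥0∞ :=
  (((x :: p).zip p).map fun e => ENNReal.ofReal (W e)).sum

/-- Shortest path length `s_G(x,y)`: the infimum of the lengths of all paths from `x`
to `y`, equal to `∞` when no such path exists. -/
noncomputable def spdist {V : Type*} (E : Finset (V × V)) (W : V × V → ℝ) (x y : V) : ℝ≥0∞ :=
  sInf {l : ℝ≥0∞ | ∃ p : List V, IsWalkFrom E x y p ∧ l = walkLength W x p}

/-- The ℓ¹ metric `d_{(V,E)}` on the space of weighted graphs sharing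
the node set `V` and edge set `E`. -/
def graphDist {V : Type*} (E : Finset (V × V)) (W W' : V × V → ℝ) : ℝ :=
  ∑ e ∈ E, |W e - W' e|

/-- The edge set `E^x` of the graph `G^x`, obtained by deleting the node `x`
together with every edge directed to or from it. -/
def deleteNode {V : Type*} [DecidableEq V] (E : Finset (V × V)) (x : V) :
    Finset (V × V) :=
  E.filter fun e => e.1 ≠ x ∧ e.2 ≠ x

/-- Stable betweenness centrality
`C_SB(x) = ∑_{x',x'' ∈ V, x' ≠ x ≠ x''} (s_{G^x}(x',x'') - s_G(x',x''))`. -/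
noncomputable def stableBetweenness {V : Type*} [Fintype V] [DecidableEq V]
    (E : Finset (V × V)) (W : V × V → ℝ) (x : V) : ℝ :=
  ∑ x' ∈ Finset.univ.filter (· ≠ x), ∑ x'' ∈ Finset.univ.filter (· ≠ x),
    ((spdist (deleteNode E x) W x' x'').toReal - (spdist E W x' x'').toReal)

theorem walkLength_cons {V : Type*} (W : V × V → ℝ) (a c : V) (p : List V) :
    walkLength W a (c :: p) = ENNReal.ofReal (W (a, c)) + walkLength W c p := by
  simp [walkLength]

theorem isWalkFrom_cons {V : Type*} (E : Finset (V × V)) (a b c : V) (p : List V) :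
    IsWalkFrom E a b (c :: p) ↔ (a, c) ∈ E ∧ IsWalkFrom E c b p := by
  unfold IsWalkFrom List.Chain
  simp [and_assoc]

/-- A node on a simple walk is the start of a final segment of it, which is a simple walk to the
same endpoint and is no longer. -/
theorem exists_tail_walk {V : Type*} (E : Finset (V × V)) (W : V × V → ℝ) (a b : V)
    (q : List V) : ∀ c : V, IsWalkFrom E c b q → (c :: q).Nodup → a ∈ c :: q →
      ∃ t : List V, IsWalkFrom E a b t ∧ (a :: t).Nodup ∧
        walkLength W a t ≤ walkLength W c q := by
  induction q with
  | nil =>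
    intro c hw hn ha
    obtain rfl : a = c := by simpa using ha
    exact ⟨[], hw, hn, le_rfl⟩
  | cons d q ih =>
    intro c hw hn ha
    rcases List.mem_cons.1 ha with rfl | ha
    · exact ⟨_, hw, hn, le_rfl⟩
    · obtain ⟨t, h1, h2, h3⟩ := ih d ((isWalkFrom_cons ..).1 hw).2 (List.nodup_cons.1 hn).2 ha
      refine ⟨t, h1, h2, h3.trans ?_⟩
      rw [walkLength_cons]
      exact le_add_self

theorem exists_simple_walk {V : Type*} (E : Finset (V × V)) (W : V × V → ℝ) (b : V)
    (p : List V) : ∀ a : V, IsWalkFrom E a b p →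
      ∃ q : List V, IsWalkFrom E a b q ∧ (a :: q).Nodup ∧
        walkLength W a q ≤ walkLength W a p := by
  induction p with
  | nil => exact fun a hw => ⟨[], hw, by simp, le_rfl⟩
  | cons c p ih =>
    intro a hw
    rw [isWalkFrom_cons] at hw
    obtain ⟨q, h1, h2, h3⟩ := ih c hw.2
    rw [walkLength_cons]
    by_cases ha : a ∈ c :: q
    · obtain ⟨t, g1, g2, g3⟩ := exists_tail_walk E W a b q c h1 h2 ha
      exact ⟨t, g1, g2, (g3.trans h3).trans le_add_self⟩
    · refine ⟨c :: q, (isWalkFrom_cons ..).2 ⟨hw.1, h1⟩, List.nodup_cons.2 ⟨ha, h2⟩, ?_⟩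
      rw [walkLength_cons]
      gcongr

theorem graphDist_nonneg {V : Type*} (E : Finset (V × V)) (W W' : V × V → ℝ) :
    0 ≤ graphDist E W W' :=
  Finset.sum_nonneg fun _ _ => abs_nonneg _

theorem graphDist_comm {V : Type*} (E : Finset (V × V)) (W W' : V × V → ℝ) :
    graphDist E W W' = graphDist E W' W :=
  Finset.sum_congr rfl fun _ _ => abs_sub_comm _ _

theorem graphDist_mono {V : Type*} {E F : Finset (V × V)} (h : F ⊆ E) (W W' : V × V → ℝ) :
    graphDist F W W' ≤ graphDist E W W' :=
  Finset.sum_le_sum_of_subset_of_nonneg h fun _ _ _ => abs_nonneg _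

theorem IsWalkFrom.edge_mem {V : Type*} {E : Finset (V × V)} {b : V} (p : List V) :
    ∀ a : V, IsWalkFrom E a b p → ∀ e ∈ (a :: p).zip p, e ∈ E := by
  induction p with
  | nil => simp
  | cons c p ih =>
    intro a hw e he
    rw [isWalkFrom_cons] at hw
    rw [List.zip_cons_cons, List.mem_cons] at he
    rcases he with rfl | he
    · exact hw.1
    · exact ih c hw.2 e he

/-- The edges of a simple walk are distinct, since their end nodes are. -/
theorem nodup_edges {V : Type*} {a : V} {p : List V} (h : (a :: p).Nodup) :
    ((a :: p).zip p).Nodup := by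
  refine List.Nodup.of_map Prod.snd ?_
  rw [List.map_snd_zip (by simp)]
  exact (List.nodup_cons.1 h).2

theorem walkLength_le_add {V : Type*} {E : Finset (V × V)} (W W' : V × V → ℝ) {a b : V}
    {p : List V} (hw : IsWalkFrom E a b p) (hn : (a :: p).Nodup) :
    walkLength W' a p ≤ walkLength W a p + ENNReal.ofReal (graphDist E W W') := by
  classical
  unfold walkLength
  rw [← List.sum_toFinset _ (nodup_edges hn), ← List.sum_toFinset _ (nodup_edges hn)]
  set S := ((a :: p).zip p).toFinset
  have hS : S ⊆ E := fun e he => hw.edge_mem p a e (List.mem_toFinset.1 he)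
  calc ∑ e ∈ S, ENNReal.ofReal (W' e)
      ≤ ∑ e ∈ S, (ENNReal.ofReal (W e) + ENNReal.ofReal |W e - W' e|) := by
        refine Finset.sum_le_sum fun e _ => ?_
        refine le_trans (ENNReal.ofReal_le_ofReal ?_) ENNReal.ofReal_add_le
        linarith [neg_abs_le (W e - W' e)]
    _ = ∑ e ∈ S, ENNReal.ofReal (W e) + ENNReal.ofReal (graphDist S W W') := by
        rw [Finset.sum_add_distrib, graphDist,
          ENNReal.ofReal_sum_of_nonneg fun _ _ => abs_nonneg _]
    _ ≤ _ := by
        gcongr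
        exact graphDist_mono hS W W'

theorem spdist_le_add {V : Type*} (E : Finset (V × V)) (W W' : V × V → ℝ) (a b : V) :
    spdist E W' a b ≤ spdist E W a b + ENNReal.ofReal (graphDist E W W') := by
  rw [← tsub_le_iff_right]
  refine le_sInf ?_
  rintro _ ⟨p, hp, rfl⟩
  obtain ⟨q, h1, h2, h3⟩ := exists_simple_walk E W b p a hp
  rw [tsub_le_iff_right]
  calc spdist E W' a b ≤ walkLength W' a q := sInf_le ⟨q, h1, rfl⟩
    _ ≤ walkLength W a q + _ := walkLength_le_add W W' h1 h2
    _ ≤ _ := by gcongr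

theorem walkLength_ne_top {V : Type*} (W : V × V → ℝ) (p : List V) :
    ∀ a : V, walkLength W a p ≠ ∞ := by
  induction p with
  | nil => simp [walkLength]
  | cons c p ih => intro a; simp [walkLength_cons, ih c]

theorem spdist_ne_top {V : Type*} {E : Finset (V × V)} (W : V × V → ℝ) {a b : V}
    (h : ∃ p, IsWalkFrom E a b p) : spdist E W a b ≠ ∞ := by
  obtain ⟨p, hp⟩ := h
  exact ne_top_of_le_ne_top (walkLength_ne_top W p a) (sInf_le ⟨p, hp, rfl⟩)

theorem abs_toReal_spdist_sub_le {V : Type*} {E : Finset (V × V)} (W W' : V × V → ℝ) {a b : V}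
    (h : ∃ p, IsWalkFrom E a b p) :
    |(spdist E W a b).toReal - (spdist E W' a b).toReal| ≤ graphDist E W W' := by
  have key : ∀ U U' : V × V → ℝ,
      (spdist E U' a b).toReal ≤ (spdist E U a b).toReal + graphDist E U U' := by
    intro U U'
    have := ENNReal.toReal_mono (by simp [spdist_ne_top U h]) (spdist_le_add E U U' a b)
    rwa [ENNReal.toReal_add (spdist_ne_top U h) ENNReal.ofReal_ne_top,
      ENNReal.toReal_ofReal (graphDist_nonneg E U U')] at this
  have h1 := key W W'
  have h2 := key W' W
  rw [graphDist_comm] at h2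
  rw [abs_le]
  constructor <;> linarith

theorem IsWalkFrom.mono {V : Type*} {E F : Finset (V × V)} (h : F ⊆ E) {a b : V} {p : List V}
    (hw : IsWalkFrom F a b p) : IsWalkFrom E a b p :=
  ⟨List.IsChain.imp (fun _ _ hab => h hab) hw.1, hw.2⟩

/-- Proposition 5: on biconnected graphs (graphs that remain strongly
connected after the removal of any single node, so that all shortest path lengths
involved are finite), stable betweenness centrality is stable with constant
`K_G = 2n²`: `|C_SB^G(x) - C_SB^H(x)| ≤ 2n² ⬝ d_{(V,E)}(G,H)` for every node `x`. -/
theorem stableBetweenness_stable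
    {V : Type*} [Fintype V] [DecidableEq V]
    (E : Finset (V × V)) (hE : ∀ e ∈ E, e.1 ≠ e.2)
    (W W' : V × V → ℝ)
    (hW : ∀ e ∈ E, 0 < W e) (hW' : ∀ e ∈ E, 0 < W' e)
    (hbi : ∀ y a b : V, a ≠ y → b ≠ y →
      ∃ p : List V, IsWalkFrom (deleteNode E y) a b p)
    (x : V) :
    |stableBetweenness E W x - stableBetweenness E W' x| ≤
      2 * (Fintype.card V : ℝ) ^ 2 * graphDist E W W' := by
  have hsub : deleteNode E x ⊆ E := Finset.filter_subset _ _
  have hd := graphDist_nonneg E W W'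
  have hterm : ∀ a b : V, a ≠ x → b ≠ x →
      |((spdist (deleteNode E x) W a b).toReal - (spdist E W a b).toReal) -
        ((spdist (deleteNode E x) W' a b).toReal - (spdist E W' a b).toReal)| ≤
        2 * graphDist E W W' := by
    intro a b ha hb
    obtain ⟨p, hp⟩ := hbi x a b ha hb
    have h1 := (abs_toReal_spdist_sub_le W W' ⟨p, hp⟩).trans (graphDist_mono hsub W W')
    have h2 := abs_toReal_spdist_sub_le W W' ⟨p, hp.mono hsub⟩
    rw [abs_le] at h1 h2 ⊢
    constructor <;> linarith
  unfold stableBetweenness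
  simp only [← Finset.sum_sub_distrib]
  set S := Finset.univ.filter (· ≠ x)
  have hS : ∀ a ∈ S, a ≠ x := fun a ha => (Finset.mem_filter.1 ha).2
  have hcard : (S.card : ℝ) ≤ Fintype.card V := by exact_mod_cast S.card_le_univ
  calc _ ≤ ∑ a ∈ S, ∑ b ∈ S, 2 * graphDist E W W' := by
        refine (Finset.abs_sum_le_sum_abs _ _).trans (Finset.sum_le_sum fun a ha => ?_)
        refine (Finset.abs_sum_le_sum_abs _ _).trans (Finset.sum_le_sum fun b hb => ?_)
        exact hterm a b (hS a ha) (hS b hb)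
    _ = 2 * (S.card : ℝ) ^ 2 * graphDist E W W' := by
        simp only [Finset.sum_const, nsmul_eq_mul]
        ring
    _ ≤ _ := by gcongr
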